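/- Assume X* ∈ ℝ^{n×n} is symmetric positive semidefinite and satisfies the discounted ARE X* = Q + γA'X*A − γ²A'X*B(R + γB'X*B)⁻¹B'X*A, and define P* := [[Q + γA'X*A, γA'X*B], [γB'X*A, R + γB'X*B]]. Then for every F ∈ ℝ^{m×n}: γ A_F' P* A_F + Λ ⪰ P*, i.e. γ A_F' P* A_F + Λ − P* is positive semidefinite. -/

import Mathlib

open Matrix MeasureTheory Filter
open scoped ENNReal

/-- Spectral radius of a real square matrix: the maximum modulus of its complex
eigenvalues, expressed via the spectral radius of its complexification. -/
noncomputable def specRad {ι : Type*} [Fintype ι] [DecidableEq ι]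
    (M : Matrix ι ι ℝ) : ℝ≥0∞ :=
  spectralRadius ℂ (M.map Complex.ofReal)

/-- The block matrix `A_F = [[A, B], [FA, FB]]`. -/
noncomputable def blockAF {n m : ℕ} (A : Matrix (Fin n) (Fin n) ℝ)
    (B : Matrix (Fin n) (Fin m) ℝ) (F : Matrix (Fin m) (Fin n) ℝ) :
    Matrix (Fin n ⊕ Fin m) (Fin n ⊕ Fin m) ℝ :=
  Matrix.fromBlocks A B (F * A) (F * B)

/-- The block column matrix `F̄ = [I_n; F]`. -/
noncomputable def extendF {n m : ℕ} (F : Matrix (Fin m) (Fin n) ℝ) :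
    Matrix (Fin n ⊕ Fin m) (Fin n) ℝ :=
  Matrix.fromRows (1 : Matrix (Fin n) (Fin n) ℝ) F

/-- The block diagonal matrix `Λ = diag(Q, R)`. -/
noncomputable def blockLam {n m : ℕ} (Q : Matrix (Fin n) (Fin n) ℝ)
    (R : Matrix (Fin m) (Fin m) ℝ) :
    Matrix (Fin n ⊕ Fin m) (Fin n ⊕ Fin m) ℝ :=
  Matrix.fromBlocks Q 0 0 R

/-- The LQR gain `F = -γ (R + γ B' X B)⁻¹ B' X A` associated with `X`. -/
noncomputable def gainF {n m : ℕ} (A : Matrix (Fin n) (Fin n) ℝ)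
    (B : Matrix (Fin n) (Fin m) ℝ) (R : Matrix (Fin m) (Fin m) ℝ)
    (γ : ℝ) (X : Matrix (Fin n) (Fin n) ℝ) : Matrix (Fin m) (Fin n) ℝ :=
  -(γ • ((R + γ • (Bᵀ * X * B))⁻¹ * (Bᵀ * X * A)))

/-- `P = [[Q + γA'XA, γA'XB], [γB'XA, R + γB'XB]]`. -/
noncomputable def Pmat {n m : ℕ} (A : Matrix (Fin n) (Fin n) ℝ)
    (B : Matrix (Fin n) (Fin m) ℝ) (Q : Matrix (Fin n) (Fin n) ℝ)
    (R : Matrix (Fin m) (Fin m) ℝ) (γ : ℝ) (X : Matrix (Fin n) (Fin n) ℝ) :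
    Matrix (Fin n ⊕ Fin m) (Fin n ⊕ Fin m) ℝ :=
  Matrix.fromBlocks (Q + γ • (Aᵀ * X * A)) (γ • (Aᵀ * X * B))
    (γ • (Bᵀ * X * A)) (R + γ • (Bᵀ * X * B))

/-- `X` solves the discounted algebraic Riccati equation
`X = Q + γA'XA − γ²A'XB(R + γB'XB)⁻¹B'XA`. -/
def IsAREsol {n m : ℕ} (A : Matrix (Fin n) (Fin n) ℝ)
    (B : Matrix (Fin n) (Fin m) ℝ) (Q : Matrix (Fin n) (Fin n) ℝ)
    (R : Matrix (Fin m) (Fin m) ℝ) (γ : ℝ) (X : Matrix (Fin n) (Fin n) ℝ) : Prop :=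
  X = Q + γ • (Aᵀ * X * A)
    - (γ ^ 2) • (Aᵀ * X * B * (R + γ • (Bᵀ * X * B))⁻¹ * (Bᵀ * X * A))

/-!
Write `G = [A B]` and `F̄ = [I; F]`. Then `A_F = F̄ G` and `P = Λ + γ G' X G`, so
`γ A_F' P A_F + Λ - P = γ G' (F̄' P F̄ - X) G`.
The Riccati equation says that `X` is the Schur complement of the lower right block of `P`, and
completing the square shows that this Schur complement is the minimum of `F̄' P F̄` over all `F`.
-/

section StateAction

variable {m n α : Type*} [DecidableEq n] [Ring α]

/-- The block column `[I; F]`, sending a state `x` to the state-action pair `(x, F x)` chosen by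
the feedback gain `F`. It is `extendF` for arbitrary index types and scalars. -/
def stateAction (F : Matrix m n α) : Matrix (n ⊕ m) n α :=
  fromRows 1 F

theorem conjTranspose_mul_mul_stateAction [Fintype m] [Fintype n] [StarRing α]
    (P : Matrix (n ⊕ m) (n ⊕ m) α) (F : Matrix m n α) :
    (stateAction F)ᴴ * P * stateAction F =
      P.toBlocks₁₁ + P.toBlocks₁₂ * F + Fᴴ * P.toBlocks₂₁ + Fᴴ * P.toBlocks₂₂ * F := by
  conv_lhs => rw [← fromBlocks_toBlocks P]
  rw [stateAction, conjTranspose_fromRows_eq_fromCols_conjTranspose, fromCols_mul_fromBlocks,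
    fromCols_mul_fromRows]
  simp only [conjTranspose_one, Matrix.one_mul, Matrix.mul_one, Matrix.add_mul]
  abel

end StateAction

section SchurComplement

variable {m n α : Type*} [Fintype m] [DecidableEq m] [CommRing α]

/-- The Schur complement of the lower right block of a block matrix. The inverse is the total
`Matrix.inv`, so this is meaningful only when that block is invertible. -/
noncomputable def schurComplement (P : Matrix (n ⊕ m) (n ⊕ m) α) : Matrix n n α :=
  P.toBlocks₁₁ - P.toBlocks₁₂ * P.toBlocks₂₂⁻¹ * P.toBlocks₂₁

variable [Fintype n] [DecidableEq n] [StarRing α] {P : Matrix (n ⊕ m) (n ⊕ m) α}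

theorem conjTranspose_mul_mul_stateAction_eq_schurComplement_add (hP : P.IsHermitian)
    (hunit : IsUnit P.toBlocks₂₂) (F : Matrix m n α) :
    (stateAction F)ᴴ * P * stateAction F = schurComplement P +
      (F + P.toBlocks₂₂⁻¹ * P.toBlocks₂₁)ᴴ * P.toBlocks₂₂ *
        (F + P.toBlocks₂₂⁻¹ * P.toBlocks₂₁) := by
  obtain ⟨-, -, h₂₁, h₂₂⟩ := isHermitian_fromBlocks_iff.mp ((fromBlocks_toBlocks P).symm ▸ hP)
  have hdet : IsUnit P.toBlocks₂₂.det := (isUnit_iff_isUnit_det _).mp hunit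
  have hsquare : (F + P.toBlocks₂₂⁻¹ * P.toBlocks₂₁)ᴴ * P.toBlocks₂₂ *
      (F + P.toBlocks₂₂⁻¹ * P.toBlocks₂₁) =
        Fᴴ * P.toBlocks₂₂ * F + Fᴴ * P.toBlocks₂₁ + P.toBlocks₁₂ * F +
          P.toBlocks₁₂ * P.toBlocks₂₂⁻¹ * P.toBlocks₂₁ := by
    rw [conjTranspose_add, conjTranspose_mul, h₂₁, h₂₂.inv.eq, Matrix.add_mul,
      nonsing_inv_mul_cancel_right _ _ hdet, Matrix.mul_add, Matrix.add_mul, Matrix.add_mul,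
      Matrix.mul_assoc Fᴴ _ (_ * _), mul_nonsing_inv_cancel_left _ _ hdet,
      ← Matrix.mul_assoc P.toBlocks₁₂]
    abel
  rw [conjTranspose_mul_mul_stateAction, schurComplement, hsquare]
  abel

theorem posSemidef_conjTranspose_mul_mul_stateAction_sub_schurComplement [PartialOrder α]
    (hP : P.IsHermitian) (hpsd : P.toBlocks₂₂.PosSemidef) (hunit : IsUnit P.toBlocks₂₂)
    (F : Matrix m n α) :
    ((stateAction F)ᴴ * P * stateAction F - schurComplement P).PosSemidef := by
  rw [conjTranspose_mul_mul_stateAction_eq_schurComplement_add hP hunit, add_sub_cancel_left]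
  exact hpsd.conjTranspose_mul_mul_same _

end SchurComplement

section QMatrix

variable {n p α : Type*} [Fintype n] [Ring α] [StarRing α]

/-- The matrix of the one-step cost `Λ` plus the discounted cost-to-go `X` after the transition
`G`: the quadratic form of the state-action value function. For `Λ = diag(Q, R)` and `G = [A B]`
it is `Pmat`. -/
def qMatrix (Λ : Matrix p p α) (G : Matrix n p α) (γ : α) (X : Matrix n n α) : Matrix p p α :=
  Λ + γ • (Gᴴ * X * G)

theorem smul_conjTranspose_mul_qMatrix_mul_add_sub [Fintype p] (Λ : Matrix p p α)
    (G : Matrix n p α) (γ : α) (X : Matrix n n α) (K : Matrix p n α) :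
    γ • ((K * G)ᴴ * qMatrix Λ G γ X * (K * G)) + Λ - qMatrix Λ G γ X =
      γ • (Gᴴ * (Kᴴ * qMatrix Λ G γ X * K - X) * G) := by
  have hassoc : (K * G)ᴴ * qMatrix Λ G γ X * (K * G) =
      Gᴴ * (Kᴴ * qMatrix Λ G γ X * K) * G := by
    simp only [conjTranspose_mul, Matrix.mul_assoc]
  have hcost : Λ - qMatrix Λ G γ X = -(γ • (Gᴴ * X * G)) := by
    rw [qMatrix, sub_add_cancel_left]
  rw [hassoc, add_sub_assoc, hcost, Matrix.mul_sub, Matrix.sub_mul, smul_sub, sub_eq_add_neg]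

end QMatrix

theorem Pstar_in_dual_feasible_set_general {m n α : Type*} [Fintype m] [DecidableEq m]
    [Fintype n] [DecidableEq n] [CommRing α] [PartialOrder α] [StarRing α] [StarOrderedRing α]
    {Λ : Matrix (n ⊕ m) (n ⊕ m) α} {G : Matrix n (n ⊕ m) α} {γ : α} {X : Matrix n n α}
    (hγ : 0 ≤ γ) (hP : (qMatrix Λ G γ X).IsHermitian)
    (hpsd : (qMatrix Λ G γ X).toBlocks₂₂.PosSemidef)
    (hunit : IsUnit (qMatrix Λ G γ X).toBlocks₂₂)
    (hX : (schurComplement (qMatrix Λ G γ X) - X).PosSemidef) (F : Matrix m n α) :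
    (γ • ((stateAction F * G)ᴴ * qMatrix Λ G γ X * (stateAction F * G))
      + Λ - qMatrix Λ G γ X).PosSemidef := by
  have hvalue : ((stateAction F)ᴴ * qMatrix Λ G γ X * stateAction F - X).PosSemidef := by
    simpa only [sub_add_sub_cancel] using
      (posSemidef_conjTranspose_mul_mul_stateAction_sub_schurComplement hP hpsd hunit F).add hX
  rw [smul_conjTranspose_mul_qMatrix_mul_add_sub]
  exact (hvalue.conjTranspose_mul_mul_same G).smul hγ

section LQR

variable {n m : ℕ} {A : Matrix (Fin n) (Fin n) ℝ} {B : Matrix (Fin n) (Fin m) ℝ}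
  {Q : Matrix (Fin n) (Fin n) ℝ} {R : Matrix (Fin m) (Fin m) ℝ} {γ : ℝ}
  {X : Matrix (Fin n) (Fin n) ℝ}

theorem blockAF_eq_stateAction_mul_fromCols (A : Matrix (Fin n) (Fin n) ℝ)
    (B : Matrix (Fin n) (Fin m) ℝ) (F : Matrix (Fin m) (Fin n) ℝ) :
    blockAF A B F = stateAction F * fromCols A B := by
  rw [blockAF, stateAction, fromRows_mul_fromCols, Matrix.one_mul, Matrix.one_mul]

theorem Pmat_eq_qMatrix (A : Matrix (Fin n) (Fin n) ℝ) (B : Matrix (Fin n) (Fin m) ℝ)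
    (Q : Matrix (Fin n) (Fin n) ℝ) (R : Matrix (Fin m) (Fin m) ℝ) (γ : ℝ)
    (X : Matrix (Fin n) (Fin n) ℝ) :
    Pmat A B Q R γ X = qMatrix (blockLam Q R) (fromCols A B) γ X := by
  rw [Pmat, qMatrix, blockLam, conjTranspose_eq_transpose_of_trivial, transpose_fromCols,
    fromRows_mul, fromRows_mul_fromCols, fromBlocks_smul, fromBlocks_add, zero_add, zero_add]

theorem isHermitian_Pmat (hQ : Q.IsHermitian) (hR : R.IsHermitian) (hX : X.IsHermitian) :
    (Pmat A B Q R γ X).IsHermitian := by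
  rw [Pmat_eq_qMatrix]
  exact (hQ.fromBlocks conjTranspose_zero hR).add
    ((isHermitian_conjTranspose_mul_mul _ hX).smul (.all γ))

theorem posDef_toBlocks₂₂_Pmat (hR : R.PosDef) (hγ : 0 ≤ γ) (hX : X.PosSemidef) :
    (Pmat A B Q R γ X).toBlocks₂₂.PosDef :=
  hR.add_posSemidef ((hX.conjTranspose_mul_mul_same B).smul hγ)

theorem schurComplement_Pmat_of_isAREsol (hX : IsAREsol A B Q R γ X) :
    schurComplement (Pmat A B Q R γ X) = X := by
  conv_rhs => rw [hX]
  simp only [schurComplement, Pmat, toBlocks_fromBlocks₁₁, toBlocks_fromBlocks₁₂,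
    toBlocks_fromBlocks₂₁, toBlocks_fromBlocks₂₂, Matrix.smul_mul, Matrix.mul_smul, smul_smul,
    pow_two]

end LQR

theorem Pstar_in_dual_feasible_set (n m : ℕ) (hn : 0 < n) (hm : 0 < m)
    (A : Matrix (Fin n) (Fin n) ℝ) (B : Matrix (Fin n) (Fin m) ℝ)
    (Q : Matrix (Fin n) (Fin n) ℝ) (R : Matrix (Fin m) (Fin m) ℝ)
    (hQ : Q.PosSemidef) (hR : R.PosDef)
    (γ : ℝ) (hγ0 : 0 < γ) (hγ1 : γ < 1)
    (Xstar : Matrix (Fin n) (Fin n) ℝ) (hXstar : Xstar.PosSemidef)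
    (hARE : IsAREsol A B Q R γ Xstar) :
    ∀ F : Matrix (Fin m) (Fin n) ℝ,
      (γ • ((blockAF A B F)ᵀ * Pmat A B Q R γ Xstar * blockAF A B F)
        + blockLam Q R - Pmat A B Q R γ Xstar).PosSemidef := by
  intro F
  have hP : (Pmat A B Q R γ Xstar).IsHermitian :=
    isHermitian_Pmat hQ.isHermitian hR.isHermitian hXstar.isHermitian
  have hblock : (Pmat A B Q R γ Xstar).toBlocks₂₂.PosDef :=
    posDef_toBlocks₂₂_Pmat hR hγ0.le hXstar
  have hfix : (schurComplement (Pmat A B Q R γ Xstar) - Xstar).PosSemidef := by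
    rw [schurComplement_Pmat_of_isAREsol hARE, sub_self]
    exact .zero
  rw [Pmat_eq_qMatrix] at hP hblock hfix ⊢
  rw [blockAF_eq_stateAction_mul_fromCols]
  exact Pstar_in_dual_feasible_set_general hγ0.le hP hblock.posSemidef hblock.isUnit hfix F
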